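/- Let p be a prime and f: Q → P an injective p-saturated homomorphism of fs monoids such that Q^gp, P^gp and P^gp/Q^gp are torsion free, and let J ⊆ Q be a radical ideal. Then an element x ∈ P is J-minimal if and only if p·x is J-minimal. -/

import Mathlib

/-!
If `n • x = r + φ q` with `r ∈ P` and `q ∈ J`, quasi-saturation divides this relation by `n` up to
enlarging `q`: it gives `y` in the ambient group of `Q` with `x - φ y ∈ P` and `n • y ∈ q + Q`.
Hence `n • y` lies in the ideal `J`, so `y ∈ Q` because `Q` is saturated, and then `y ∈ J` because
`J` is radical.
-/

/-- `x ∈ P` is `J`-minimal (for an ideal `J ⊆ Q` and a monoid homomorphism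
`f : Q → P` restricted from `φ : Q^gp →+ P^gp`) if `x` cannot be written as
`x = r + f q` with `r ∈ P` and `q ∈ J`. -/
def JMinimal {GQ GP : Type*} [AddCommGroup GQ] [AddCommGroup GP]
    (φ : GQ →+ GP) (P : AddSubmonoid GP) (J : Set GQ) (x : GP) : Prop :=
  ¬ ∃ r ∈ P, ∃ q ∈ J, x = r + φ q

section

variable {GQ GP : Type*} [AddCommGroup GQ] [AddCommGroup GP]
  {φ : GQ →+ GP} {Q : AddSubmonoid GQ} {P : AddSubmonoid GP} {J : Set GQ} {n : ℕ}

/-- `n`-quasi-saturation, for any natural number `n`, of `φ` relative to `Q` and `P`. The elements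
of `P^gp` and `Q^gp` it concerns are written as differences, while `x` ranges over all of `GQ`; this
is the usual notion when `φ` maps `Q` into `P` and `Q` generates `GQ`. -/
def IsQuasiSaturated (n : ℕ) (φ : GQ →+ GP) (Q : AddSubmonoid GQ) (P : AddSubmonoid GP) : Prop :=
  ∀ r₁ ∈ P, ∀ r₂ ∈ P, ∀ q₁ ∈ Q, ∀ q₂ ∈ Q, n • (r₁ - r₂) + φ (q₁ - q₂) ∈ P →
    ∃ x : GQ, (r₁ - r₂) + φ x ∈ P ∧ (q₁ - q₂) - n • x ∈ Q

/-- `J` is a radical ideal of the monoid `Q`. As for `JMinimal`, ideals of `Q` are encoded as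
subsets of the ambient group. -/
structure IsRadicalIdeal (Q : AddSubmonoid GQ) (J : Set GQ) : Prop where
  subset : J ⊆ Q
  add_mem : ∀ x ∈ J, ∀ q ∈ Q, x + q ∈ J
  mem_of_nsmul_mem : ∀ x ∈ Q, (∃ n : ℕ, 0 < n ∧ n • x ∈ J) → x ∈ J

theorem IsQuasiSaturated.exists_sub_map_mem (hφ : IsQuasiSaturated n φ Q P) {x : GP} (hx : x ∈ P)
    {q : GQ} (hq : q ∈ Q) (h : n • x - φ q ∈ P) :
    ∃ y : GQ, x - φ y ∈ P ∧ n • y - q ∈ Q := by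
  obtain ⟨y, hxy, hyq⟩ := hφ x hx 0 P.zero_mem 0 Q.zero_mem q hq (by simpa [sub_eq_add_neg] using h)
  refine ⟨-y, by simpa using hxy, ?_⟩
  convert hyq using 1
  rw [smul_neg]
  abel

theorem IsRadicalIdeal.mem_of_nsmul_mem_of_nsmulSaturated (hJ : IsRadicalIdeal Q J)
    (hQ : Q.NSMulSaturated) (hn : n ≠ 0) {y : GQ} (hy : n • y ∈ J) : y ∈ J :=
  hJ.mem_of_nsmul_mem y ((hQ (hJ.subset hy)).resolve_left hn) ⟨n, hn.pos, hy⟩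

theorem jMinimal_iff_forall_sub_map_notMem {x : GP} :
    JMinimal φ P J x ↔ ∀ q ∈ J, x - φ q ∉ P := by
  refine ⟨fun h q hq hxq ↦ h ⟨x - φ q, hxq, q, hq, (sub_add_cancel x (φ q)).symm⟩, ?_⟩
  rintro h ⟨r, hr, q, hq, rfl⟩
  exact h q hq (by rwa [add_sub_cancel_right])

theorem JMinimal.of_add {x r : GP} (h : JMinimal φ P J (x + r)) (hr : r ∈ P) :
    JMinimal φ P J x := by
  rw [jMinimal_iff_forall_sub_map_notMem] at h ⊢
  intro q hq hx
  exact h q hq (add_sub_right_comm x r (φ q) ▸ P.add_mem hx hr)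

theorem JMinimal.of_nsmul {x : GP} (hx : x ∈ P) (hn : n ≠ 0) (h : JMinimal φ P J (n • x)) :
    JMinimal φ P J x := by
  obtain ⟨m, rfl⟩ := Nat.exists_eq_succ_of_ne_zero hn
  rw [succ_nsmul'] at h
  exact h.of_add (P.nsmul_mem hx m)

theorem JMinimal.nsmul (hQ : Q.NSMulSaturated) (hφ : IsQuasiSaturated n φ Q P)
    (hJ : IsRadicalIdeal Q J) (hn : n ≠ 0) {x : GP} (hx : x ∈ P) (h : JMinimal φ P J x) :
    JMinimal φ P J (n • x) := by
  rw [jMinimal_iff_forall_sub_map_notMem] at h ⊢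
  intro q hq hnx
  obtain ⟨y, hxy, hyq⟩ := hφ.exists_sub_map_mem hx (hJ.subset hq) hnx
  have hny : n • y ∈ J := add_sub_cancel q (n • y) ▸ hJ.add_mem q hq _ hyq
  exact h y (hJ.mem_of_nsmul_mem_of_nsmulSaturated hQ hn hny) hxy

theorem jMinimal_iff_pSMul_general (hQ : Q.NSMulSaturated) (hφ : IsQuasiSaturated n φ Q P)
    (hJ : IsRadicalIdeal Q J) (hn : n ≠ 0) {x : GP} (hx : x ∈ P) :
    JMinimal φ P J x ↔ JMinimal φ P J (n • x) :=
  ⟨.nsmul hQ hφ hJ hn hx, .of_nsmul hx hn⟩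

end

/-- Let `p` be a prime and `f : Q → P` an injective
`p`-saturated homomorphism of fs monoids such that `Q^gp`, `P^gp` and
`P^gp/Q^gp` are torsion free, and let `J ⊆ Q` be a radical ideal.  (Monoids are
modelled as additive submonoids of the abelian groups `GQ = Q^gp`, `GP = P^gp`
they generate, `f` being the restriction of `φ = f^gp : GQ →+ GP`.)  Then an
element `x ∈ P` is `J`-minimal if and only if `p • x` is `J`-minimal. -/
theorem jMinimal_iff_pSMul
    (p : ℕ) (hp : p.Prime)
    {GQ GP : Type*} [AddCommGroup GQ] [AddCommGroup GP]
    (Q : AddSubmonoid GQ) (P : AddSubmonoid GP)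
    (φ : GQ →+ GP) (hmap : ∀ x ∈ Q, φ x ∈ P)
    (hinj : ∀ a ∈ Q, ∀ b ∈ Q, φ a = φ b → a = b)
    (hQGen : AddSubgroup.closure (Q : Set GQ) = ⊤)
    (hPGen : AddSubgroup.closure (P : Set GP) = ⊤)
    (hQFG : AddMonoid.FG ↥Q) (hPFG : AddMonoid.FG ↥P)
    (hQsat : ∀ g : GQ, ∀ n : ℕ, 0 < n → n • g ∈ Q → g ∈ Q)
    (hPsat : ∀ g : GP, ∀ n : ℕ, 0 < n → n • g ∈ P → g ∈ P)
    (hTFQ : ∀ (g : GQ) (n : ℕ), 0 < n → n • g = 0 → g = 0)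
    (hTFP : ∀ (g : GP) (n : ℕ), 0 < n → n • g = 0 → g = 0)
    (hTFquot : ∀ (g : GP) (n : ℕ), 0 < n → n • g ∈ AddMonoidHom.range φ →
      g ∈ AddMonoidHom.range φ)
    (hpqs : ∀ r₁ ∈ P, ∀ r₂ ∈ P, ∀ q₁ ∈ Q, ∀ q₂ ∈ Q,
        p • (r₁ - r₂) + φ (q₁ - q₂) ∈ P →
        ∃ x : GQ, (r₁ - r₂) + φ x ∈ P ∧ (q₁ - q₂) - p • x ∈ Q)
    (hint : ∀ a₁ ∈ Q, ∀ a₂ ∈ Q, ∀ b₁ ∈ P, ∀ b₂ ∈ P,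
        φ a₁ + b₁ = φ a₂ + b₂ →
        ∃ a₃ ∈ Q, ∃ a₄ ∈ Q, ∃ b ∈ P,
          b₁ = φ a₃ + b ∧ b₂ = φ a₄ + b ∧ a₁ + a₃ = a₂ + a₄)
    (J : Set GQ) (hJQ : J ⊆ (Q : Set GQ))
    (hJideal : ∀ x ∈ J, ∀ q ∈ Q, x + q ∈ J)
    (hJrad : ∀ x ∈ Q, (∃ n : ℕ, 0 < n ∧ n • x ∈ J) → x ∈ J) :
    ∀ x ∈ P, (JMinimal φ P J x ↔ JMinimal φ P J (p • x)) :=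
  fun _ hx ↦ jMinimal_iff_pSMul_general
    (fun n g h ↦ n.eq_zero_or_pos.imp_right fun hn ↦ hQsat g n hn h) hpqs
    ⟨hJQ, hJideal, hJrad⟩ hp.ne_zero hx
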